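/- Let d ≥ 1 and let X and Y be d×d real matrices, each permutation similar to a unit lower-triangular matrix: there exist permutations σ and τ of {1,…,d} such that X_{σ(i)σ(i)} = 1 for all i and X_{σ(i)σ(j)} = 0 whenever i < j, and likewise Y_{τ(i)τ(i)} = 1 for all i and Y_{τ(i)τ(j)} = 0 whenever i < j. If X Xᵀ = Y Yᵀ, then X = Y. -/

import Mathlib

open Matrix

/-!
`X * Xᵀ = Y * Yᵀ` says that the rows of `X` and of `Y` have the same Gram matrix. Order the indices
so that `X` is lower triangular, and suppose that `X` and `Y` agree on the columns before `k`. Row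
`k` of `X` vanishes after column `k`, and `0 < X k k ≤ Y k k`, so entrywise it is at most row `k` of
`Y` in absolute value; as the two rows have equal norms, they coincide. Pairing any row `i` with
this common row `k`, every term cancels except the one of column `k`, which leaves `X i k = Y i k`.
-/

section Vectors

variable {n R : Type*} [Fintype n]

lemma apply_eq_of_dotProduct_eq [NonUnitalNonAssocRing R] [NoZeroDivisors R]
    {u v w : n → R} {k : n} (hk : w k ≠ 0)
    (hne : ∀ j ≠ k, u j = v j ∨ w j = 0) (h : u ⬝ᵥ w = v ⬝ᵥ w) : u k = v k := by
  have hsum : (u - v) ⬝ᵥ w = 0 := by rw [sub_dotProduct, h, sub_self]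
  have hterm : (u k - v k) * w k = 0 := by
    rwa [dotProduct, Fintype.sum_eq_single k] at hsum
    intro j hj
    rcases hne j hj with huv | hw
    · simp [huv]
    · simp [hw]
  exact sub_eq_zero.1 ((mul_eq_zero.1 hterm).resolve_right hk)

variable [Ring R] [LinearOrder R] [IsStrictOrderedRing R] {u v : n → R}

lemma abs_eq_abs_of_dotProduct_self_eq (hle : ∀ j, |u j| ≤ |v j|) (h : u ⬝ᵥ u = v ⬝ᵥ v) (j : n) :
    |u j| = |v j| := by
  have hsq : ∀ i ∈ Finset.univ, u i * u i ≤ v i * v i := fun i _ ↦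
    abs_le_iff_mul_self_le.1 (hle i)
  exact abs_eq_iff_mul_self_eq.2 <|
    (Finset.sum_eq_sum_iff_of_le hsq).1 h j (Finset.mem_univ j)

lemma eq_of_dotProduct_self_eq_of_eq_zero_of_gt [LinearOrder n] {k : n}
    (hlt : ∀ j < k, u j = v j) (hgt : ∀ j > k, u j = 0) (hk₀ : 0 ≤ u k) (hk : u k ≤ v k)
    (h : u ⬝ᵥ u = v ⬝ᵥ v) : u = v := by
  have habs : ∀ j, |u j| = |v j| := by
    refine abs_eq_abs_of_dotProduct_self_eq (fun j ↦ ?_) h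
    rcases lt_trichotomy j k with hj | rfl | hj
    · rw [hlt j hj]
    · exact abs_le_abs_of_nonneg hk₀ hk
    · simp [hgt j hj]
  ext j
  rcases lt_trichotomy j k with hj | rfl | hj
  · exact hlt j hj
  · simpa only [abs_of_nonneg hk₀, abs_of_nonneg (hk₀.trans hk)] using habs j
  · have hv : v j = 0 := by simpa [hgt j hj, eq_comm] using habs j
    rw [hgt j hj, hv]

end Vectors

section Matrices

variable {m n R : Type*} [LinearOrder m] [Fintype n] [Ring R] [LinearOrder R]
  [IsStrictOrderedRing R]

theorem eq_of_mul_transpose_self_eq_of_lowerTriangular [Fintype m] {X Y : Matrix m m R}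
    (hX : X.BlockTriangular OrderDual.toDual) (hpos : ∀ i, 0 < X i i) (hle : ∀ i, X i i ≤ Y i i)
    (h : X * Xᵀ = Y * Yᵀ) : X = Y := by
  have hgram : ∀ i j, X i ⬝ᵥ X j = Y i ⬝ᵥ Y j := fun i j ↦ congr_fun₂ h i j
  suffices hcol : ∀ k i, X i k = Y i k from ext fun i k ↦ hcol k i
  intro k
  induction k using WellFoundedLT.induction with
  | ind k ih =>
    have hrow : X k = Y k :=
      eq_of_dotProduct_self_eq_of_eq_zero_of_gt (fun j hj ↦ ih j hj k) (fun _ hj ↦ hX hj)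
        (hpos k).le (hle k) (hgram k k)
    intro i
    refine apply_eq_of_dotProduct_eq (hpos k).ne' (fun j hj ↦ ?_) ((hgram i k).trans (by rw [hrow]))
    exact hj.lt_or_gt.imp (fun hlt ↦ ih j hlt i) (fun hgt ↦ hX hgt)

theorem oicid_stmt_6_general (X Y : Matrix n n R) (σ : m ≃ n)
    (hXpos : ∀ i, 0 < X i i) (hXupper : ∀ i j, i < j → X (σ i) (σ j) = 0)
    (hle : ∀ i, X i i ≤ Y i i) (h : X * Xᵀ = Y * Yᵀ) : X = Y := by
  let _ : Fintype m := .ofEquiv n σ.symm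
  have hσ : X.submatrix σ σ = Y.submatrix σ σ := by
    refine eq_of_mul_transpose_self_eq_of_lowerTriangular (fun i j ↦ hXupper i j)
      (fun i ↦ hXpos (σ i)) (fun i ↦ hle (σ i)) ?_
    simp only [transpose_submatrix, submatrix_mul_equiv, h]
  exact (reindex σ.symm σ.symm).injective hσ

end Matrices

theorem oicid_stmt_6 (d : ℕ) (hd : 1 ≤ d)
    (X Y : Matrix (Fin d) (Fin d) ℝ)
    (σ τ : Equiv.Perm (Fin d))
    (hXdiag : ∀ i : Fin d, X (σ i) (σ i) = 1)
    (hXupper : ∀ i j : Fin d, i < j → X (σ i) (σ j) = 0)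
    (hYdiag : ∀ i : Fin d, Y (τ i) (τ i) = 1)
    (hYupper : ∀ i j : Fin d, i < j → Y (τ i) (τ j) = 0)
    (h : X * Xᵀ = Y * Yᵀ) :
    X = Y := by
  have hX : ∀ i, X i i = 1 := σ.surjective.forall.2 hXdiag
  have hY : ∀ i, Y i i = 1 := τ.surjective.forall.2 hYdiag
  exact oicid_stmt_6_general X Y σ (by simp [hX]) hXupper (by simp [hX, hY]) h
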